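/- arXiv:2409.12819 — 3 statements merged into one kernel-verified Lean document; each statement's English description precedes it below -/
import Mathlib

section
/- Fix an integer r ≥ 2. For k sufficiently large in terms of r, the function F_k satisfies J_k^{(r)}(F_k) ≤ ((log k)/k)^r · I_k(F_k). -/
open MeasureTheory Filter

/-- `A = log k - 2 log log k`. -/
noncomputable def Aval (k : ℕ) : ℝ := Real.log k - 2 * Real.log (Real.log k)

/-- `T = (e^A - 1)/A`. -/
noncomputable def Tval (k : ℕ) : ℝ := (Real.exp (Aval k) - 1) / Aval k

/-- `g(t) = 1/(1+At)` for `t ∈ [0,T]` and `0` otherwise. -/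
noncomputable def gfun (k : ℕ) (t : ℝ) : ℝ :=
  if t ∈ Set.Icc (0 : ℝ) (Tval k) then 1 / (1 + Aval k * t) else 0

/-- `F_k(t_1,…,t_k) = ∏ g(k t_i)` if `t_1 + ⋯ + t_k ≤ 1`, and `0` otherwise. -/
noncomputable def Fk (k : ℕ) (t : Fin k → ℝ) : ℝ :=
  if ∑ i, t i ≤ 1 then ∏ i, gfun k (k * t i) else 0

/-- `I_k(F) = ∫_{[0,∞)^k} F`. -/
noncomputable def Iint (k : ℕ) (F : (Fin k → ℝ) → ℝ) : ℝ :=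
  ∫ t in Set.univ.pi (fun _ : Fin k => Set.Ici (0 : ℝ)), F t

/-- `J_k^(r)(F) = ∫_{[0,∞)^{k-r}} (∫_{[0,∞)^r} F dt_{k-r+1}⋯dt_k)² dt_1⋯dt_{k-r}`. -/
noncomputable def Jint (k r : ℕ) (h : r ≤ k) (F : (Fin k → ℝ) → ℝ) : ℝ :=
  ∫ t in Set.univ.pi (fun _ : Fin (k - r) => Set.Ici (0 : ℝ)),
    (∫ u in Set.univ.pi (fun _ : Fin r => Set.Ici (0 : ℝ)),
      F (fun i => Fin.append t u (Fin.cast (Nat.sub_add_cancel h).symm i))) ^ 2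


namespace Aux8

lemma g_nonneg {k : ℕ} (hA : 0 < Aval k) (t : ℝ) : 0 ≤ gfun k t := by
  unfold gfun
  split_ifs with h
  · have : 0 ≤ Aval k * t := mul_nonneg hA.le h.1
    positivity
  · exact le_rfl

lemma g_eq (k : ℕ) : gfun k =
    (Set.Icc (0 : ℝ) (Tval k)).indicator (fun t => 1 / (1 + Aval k * t)) := by
  funext t
  simp only [gfun, Set.indicator]

lemma cont_on {a : ℝ} (hA : 0 < a) (T : ℝ) :
    ContinuousOn (fun t : ℝ => 1 / (1 + a * t)) (Set.Icc 0 T) := by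
  apply ContinuousOn.div (by fun_prop) (by fun_prop)
  intro x hx
  have : 0 ≤ a * x := mul_nonneg hA.le hx.1
  positivity

lemma g_int {k : ℕ} (hA : 0 < Aval k) : Integrable (gfun k) := by
  rw [g_eq, integrable_indicator_iff measurableSet_Icc]
  exact (cont_on hA _).integrableOn_Icc

lemma g_sq_eq (k : ℕ) : (fun t => gfun k t ^ 2) =
    (Set.Icc (0 : ℝ) (Tval k)).indicator (fun t => (1 / (1 + Aval k * t)) ^ 2) := by
  funext t
  simp only [gfun, Set.indicator]
  split_ifs <;> simp

lemma g_sq_int {k : ℕ} (hA : 0 < Aval k) : Integrable (fun t => gfun k t ^ 2) := by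
  rw [g_sq_eq, integrable_indicator_iff measurableSet_Icc]
  exact ((cont_on hA _).pow 2).integrableOn_Icc

lemma int_inv {a T : ℝ} (hA : 0 < a) (hT : 0 ≤ T) :
    ∫ t in Set.Icc 0 T, 1 / (1 + a * t) = Real.log (1 + a * T) / a := by
  rw [integral_Icc_eq_integral_Ioc, ← intervalIntegral.integral_of_le hT]
  rw [intervalIntegral.integral_eq_sub_of_hasDerivAt (f := fun t => Real.log (1 + a * t) / a)]
  · simp
  · intro x hx
    rw [Set.uIcc_of_le hT] at hx
    have h0 : 0 ≤ a * x := mul_nonneg hA.le hx.1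
    have h1 : HasDerivAt (fun t : ℝ => 1 + a * t) a x := by
      simpa using ((hasDerivAt_id x).const_mul a).const_add 1
    have := (h1.log (by positivity)).div_const a
    refine this.congr_deriv ?_
    have h3 : (1 + a * x) ≠ 0 := by positivity
    field_simp
  · apply ContinuousOn.intervalIntegrable
    rw [Set.uIcc_of_le hT]
    exact cont_on hA T

lemma int_inv_sq {a T : ℝ} (hA : 0 < a) (hT : 0 ≤ T) :
    ∫ t in Set.Icc 0 T, (1 / (1 + a * t)) ^ 2 ≤ 1 / a := by
  rw [integral_Icc_eq_integral_Ioc, ← intervalIntegral.integral_of_le hT]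
  rw [intervalIntegral.integral_eq_sub_of_hasDerivAt (f := fun t => -((1 + a * t)⁻¹) / a)]
  · have : 0 ≤ (1 + a * T)⁻¹ / a := by positivity
    have h2 : -((1 + a * 0)⁻¹) / a = - (1 / a) := by simp; ring
    rw [h2, neg_div]
    linarith
  · intro x hx
    rw [Set.uIcc_of_le hT] at hx
    have h0 : 0 ≤ a * x := mul_nonneg hA.le hx.1
    have h1 : HasDerivAt (fun t : ℝ => 1 + a * t) a x := by
      simpa using ((hasDerivAt_id x).const_mul a).const_add 1
    have := ((h1.fun_inv (by positivity)).fun_neg).div_const a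
    refine this.congr_deriv ?_
    have h3 : (1 + a * x) ≠ 0 := by positivity
    field_simp
  · apply ContinuousOn.intervalIntegrable
    rw [Set.uIcc_of_le hT]
    exact (cont_on hA T).pow 2

lemma T_ge {k : ℕ} (hA : 0 < Aval k) : 1 ≤ Tval k := by
  unfold Tval
  rw [le_div_iff₀ hA]
  linarith [Real.add_one_le_exp (Aval k)]

lemma g_one {k : ℕ} (hA : 0 < Aval k) : ∫ t, gfun k t = 1 := by
  have hT := T_ge hA
  rw [g_eq, integral_indicator measurableSet_Icc, int_inv hA (by linarith)]
  have : 1 + Aval k * Tval k = Real.exp (Aval k) := by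
    unfold Tval; field_simp; ring
  rw [this, Real.log_exp]
  field_simp

lemma g_sq {k : ℕ} (hA : 0 < Aval k) : ∫ t, gfun k t ^ 2 ≤ 1 / Aval k := by
  have hT := T_ge hA
  rw [g_sq_eq, integral_indicator measurableSet_Icc]
  exact int_inv_sq hA (by linarith)

lemma g_low {k : ℕ} (hA : 2 ≤ Aval k) :
    1 / Aval k ≤ ∫ t, (Set.Icc (0:ℝ) 1).indicator (gfun k) t := by
  have hA0 : 0 < Aval k := by linarith
  have hT := T_ge hA0
  rw [integral_indicator measurableSet_Icc]
  have : ∫ t in Set.Icc (0:ℝ) 1, gfun k t = ∫ t in Set.Icc (0:ℝ) 1, 1 / (1 + Aval k * t) := by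
    apply setIntegral_congr_fun measurableSet_Icc
    intro t ht
    simp only [gfun]
    rw [if_pos ⟨ht.1, ht.2.trans hT⟩]
  rw [this, int_inv hA0 zero_le_one]
  apply div_le_div_of_nonneg_right _ hA0.le
  rw [Real.le_log_iff_exp_le (by positivity)]
  linarith [Real.exp_one_lt_three]

lemma g_neg {k : ℕ} {t : ℝ} (ht : t < 0) : gfun k t = 0 := by
  unfold gfun
  rw [if_neg]
  intro h
  exact absurd h.1 (not_le.mpr ht)

lemma prod_zero {k n : ℕ} (hk : 0 < k) (t : Fin n → ℝ)
    (ht : t ∉ Set.univ.pi (fun _ : Fin n => Set.Ici (0 : ℝ))) :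
    ∏ i, gfun k (k * t i) = 0 := by
  simp only [Set.mem_pi, Set.mem_univ, Set.mem_Ici, true_imp_iff, not_forall, not_le] at ht
  obtain ⟨i, hi⟩ := ht
  apply Finset.prod_eq_zero (Finset.mem_univ i)
  apply g_neg
  have : (0:ℝ) < k := by exact_mod_cast hk
  nlinarith

lemma gk_int {k : ℕ} (hk : 0 < k) (hA : 0 < Aval k) : Integrable (fun x : ℝ => gfun k (k * x)) := by
  have : (k:ℝ) ≠ 0 := by positivity
  exact (g_int hA).comp_mul_left' this

lemma gk_one {k : ℕ} (hk : 0 < k) (hA : 0 < Aval k) : ∫ x : ℝ, gfun k (k * x) = 1 / k := by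
  rw [Measure.integral_comp_mul_left (gfun k), g_one hA]
  simp

lemma prod_int {k : ℕ} (n : ℕ) (hk : 0 < k) (hA : 0 < Aval k) :
    Integrable (fun t : Fin n → ℝ => ∏ i, gfun k (k * t i)) :=
  Integrable.fintype_prod (f := fun _ x => gfun k (k * x)) (fun _ => gk_int hk hA)

lemma prod_nonneg {k n : ℕ} (hA : 0 < Aval k) (t : Fin n → ℝ) :
    0 ≤ ∏ i, gfun k (k * t i) := Finset.prod_nonneg (fun _ _ => g_nonneg hA _)

lemma Fk_nonneg {k : ℕ} (hA : 0 < Aval k) (t : Fin k → ℝ) : 0 ≤ Fk k t := by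
  unfold Fk
  split_ifs
  · exact prod_nonneg hA t
  · exact le_rfl

lemma Fk_le {k : ℕ} (hA : 0 < Aval k) (t : Fin k → ℝ) : Fk k t ≤ ∏ i, gfun k (k * t i) := by
  unfold Fk
  split_ifs
  · exact le_rfl
  · exact prod_nonneg hA t

lemma Fk_int {k : ℕ} (hk : 0 < k) (hA : 0 < Aval k) : Integrable (Fk k) := by
  have : Fk k = {t : Fin k → ℝ | ∑ i, t i ≤ 1}.indicator
      (fun t : Fin k → ℝ => ∏ i, gfun k (k * t i)) := by
    funext t
    simp [Fk, Set.indicator]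
  rw [this]
  apply (prod_int k hk hA).indicator
  exact measurableSet_le (by fun_prop) (by fun_prop)

lemma I_low {k : ℕ} (hk : 0 < k) (hA : 2 ≤ Aval k) :
    (1 / (k * Aval k)) ^ k ≤ Iint k (Fk k) := by
  have hA0 : 0 < Aval k := by linarith
  have hk0 : (0:ℝ) < k := by exact_mod_cast hk
  unfold Iint
  rw [setIntegral_eq_integral_of_forall_compl_eq_zero]
  swap
  · intro t ht
    unfold Fk
    rw [prod_zero hk t ht]
    simp
  set φ : ℝ → ℝ := fun x => (Set.Icc (0:ℝ) 1).indicator (gfun k) (k * x) with hφ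
  have hφ0 : ∀ x, 0 ≤ φ x := fun x => Set.indicator_nonneg (fun _ _ => g_nonneg hA0 _) _
  have h1 : 1 / (k * Aval k) ≤ ∫ x, φ x := by
    rw [hφ, Measure.integral_comp_mul_left ((Set.Icc (0:ℝ) 1).indicator (gfun k))]
    have := g_low hA
    rw [abs_of_pos (by positivity), smul_eq_mul]
    calc 1 / (k * Aval k) = (k:ℝ)⁻¹ * (1 / Aval k) := by field_simp
      _ ≤ _ := by gcongr
  calc (1 / (k * Aval k)) ^ k ≤ (∫ x, φ x) ^ k := by gcongr
    _ = ∫ t : Fin k → ℝ, ∏ i, φ (t i) := by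
      rw [integral_fintype_prod_volume_eq_prod (f := fun _ => φ)]
      simp
    _ ≤ _ := by
      apply integral_mono_of_nonneg
      · exact Eventually.of_forall (fun t => Finset.prod_nonneg (fun _ _ => hφ0 _))
      · exact Fk_int hk hA0
      · apply Eventually.of_forall
        intro t
        by_cases ht : ∀ i, (k:ℝ) * t i ∈ Set.Icc (0:ℝ) 1
        · have hs : ∑ i, t i ≤ 1 := by
            have : ∑ i, t i ≤ ∑ i : Fin k, (1 / (k:ℝ)) := by
              apply Finset.sum_le_sum
              intro i _
              rw [le_div_iff₀ hk0]
              linarith [(ht i).2]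
            refine this.trans ?_
            simp [hk0.ne']
          simp only [Fk, if_pos hs, hφ]
          apply le_of_eq
          apply Finset.prod_congr rfl
          intro i _
          rw [Set.indicator_of_mem (ht i)]
        · push Not at ht
          obtain ⟨i, hi⟩ := ht
          have : ∏ i, φ (t i) = 0 := by
            apply Finset.prod_eq_zero (Finset.mem_univ i)
            exact Set.indicator_of_notMem hi _
          simp only [this]
          exact Fk_nonneg hA0 t

lemma prod_split {k r : ℕ} (h : r ≤ k) (f : ℝ → ℝ) (t : Fin (k - r) → ℝ) (u : Fin r → ℝ) :
    ∏ i, f (Fin.append t u (Fin.cast (Nat.sub_add_cancel h).symm i)) =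
      (∏ i, f (t i)) * ∏ j, f (u j) := by
  refine ((finCongr (Nat.sub_add_cancel h).symm).prod_comp
    (fun i => f (Fin.append t u i))).trans ?_
  rw [Fin.prod_univ_add]
  simp

lemma J_up {k r : ℕ} (h : r ≤ k) (hk : 0 < k) (hA : 0 < Aval k) :
    Jint k r h (Fk k) ≤ ((1 / (k:ℝ)) ^ r) ^ 2 * (1 / (k * Aval k)) ^ (k - r) := by
  have hk0 : (0:ℝ) < k := by exact_mod_cast hk
  have hinner0 : ∀ t : Fin (k - r) → ℝ,
      0 ≤ ∫ u in Set.univ.pi (fun _ : Fin r => Set.Ici (0 : ℝ)),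
        Fk k (fun i => Fin.append t u (Fin.cast (Nat.sub_add_cancel h).symm i)) :=
    fun t => integral_nonneg (fun u => Fk_nonneg hA _)
  have hinner : ∀ t : Fin (k - r) → ℝ,
      ∫ u in Set.univ.pi (fun _ : Fin r => Set.Ici (0 : ℝ)),
        Fk k (fun i => Fin.append t u (Fin.cast (Nat.sub_add_cancel h).symm i)) ≤
      (∏ i, gfun k (k * t i)) * (1 / (k:ℝ)) ^ r := by
    intro t
    calc _ ≤ ∫ u in Set.univ.pi (fun _ : Fin r => Set.Ici (0 : ℝ)),
          (∏ i, gfun k (k * t i)) * ∏ j, gfun k (k * u j) := by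
          apply integral_mono_of_nonneg
          · exact Eventually.of_forall (fun u => Fk_nonneg hA _)
          · exact ((prod_int r hk hA).const_mul _).integrableOn
          · apply Eventually.of_forall
            intro u
            refine (Fk_le hA _).trans (le_of_eq ?_)
            exact prod_split h (fun x => gfun k (k * x)) t u
      _ = _ := by
          rw [setIntegral_eq_integral_of_forall_compl_eq_zero]
          · rw [integral_const_mul,
              integral_fintype_prod_volume_eq_prod (f := fun _ x => gfun k (k * x))]
            simp [gk_one hk hA]
          · intro u hu
            rw [prod_zero hk u hu, mul_zero]
  have hsqi : Integrable (fun x : ℝ => gfun k (k * x) ^ 2) :=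
    (g_sq_int hA).comp_mul_left' hk0.ne'
  have hint : Integrable (fun t : Fin (k - r) → ℝ =>
      ((1 / (k:ℝ)) ^ r) ^ 2 * ∏ i, gfun k (k * t i) ^ 2) :=
    (Integrable.fintype_prod (f := fun _ x => gfun k (k * x) ^ 2) (fun _ => hsqi)).const_mul _
  have hsq0 : 0 ≤ ∫ x : ℝ, gfun k (k * x) ^ 2 := integral_nonneg (fun x => sq_nonneg _)
  have hsq : ∫ x : ℝ, gfun k (k * x) ^ 2 ≤ 1 / (k * Aval k) := by
    rw [Measure.integral_comp_mul_left (fun x => gfun k x ^ 2)]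
    have := g_sq hA
    rw [abs_of_pos (by positivity), smul_eq_mul]
    calc _ ≤ (k:ℝ)⁻¹ * (1 / Aval k) := by gcongr
      _ = _ := by field_simp
  unfold Jint
  calc _ ≤ ∫ t in Set.univ.pi (fun _ : Fin (k - r) => Set.Ici (0 : ℝ)),
        ((1 / (k:ℝ)) ^ r) ^ 2 * ∏ i, gfun k (k * t i) ^ 2 := by
        apply integral_mono_of_nonneg
        · exact Eventually.of_forall (fun u => sq_nonneg _)
        · exact hint.integrableOn
        · apply Eventually.of_forall
          intro t
          refine (pow_le_pow_left₀ (hinner0 t) (hinner t) 2).trans (le_of_eq ?_)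
          simp only [Finset.prod_pow]
          ring
    _ ≤ ∫ t : Fin (k - r) → ℝ, ((1 / (k:ℝ)) ^ r) ^ 2 * ∏ i, gfun k (k * t i) ^ 2 := by
        apply setIntegral_le_integral hint
        exact Eventually.of_forall (fun t => mul_nonneg (by positivity)
          (Finset.prod_nonneg (fun _ _ => sq_nonneg _)))
    _ = ((1 / (k:ℝ)) ^ r) ^ 2 * (∫ x : ℝ, gfun k (k * x) ^ 2) ^ (k - r) := by
        rw [integral_const_mul,
          integral_fintype_prod_volume_eq_prod (f := fun _ x => gfun k (k * x) ^ 2)]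
        simp
    _ ≤ _ := by gcongr

lemma A_ev : ∀ᶠ k : ℕ in atTop, 2 ≤ Aval k ∧ Aval k ≤ Real.log k := by
  have hl : Tendsto (fun k : ℕ => Real.log k) atTop atTop :=
    Real.tendsto_log_atTop.comp tendsto_natCast_atTop_atTop
  have h1 : ∀ᶠ x : ℝ in atTop, |Real.log x| ≤ (1/4) * |x| := by
    have := Real.isLittleO_log_id_atTop.bound (show (0:ℝ) < 1/4 by norm_num)
    simpa using this
  filter_upwards [hl.eventually h1, hl.eventually (eventually_ge_atTop 4)] with k ha hb
  have h0 : 0 ≤ Real.log (Real.log k) := Real.log_nonneg (by linarith)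
  rw [abs_of_nonneg h0, abs_of_nonneg (by linarith)] at ha
  unfold Aval
  constructor <;> linarith

end Aux8

theorem stmt8 (r : ℕ) (hr : 2 ≤ r) :
    ∀ᶠ k : ℕ in atTop, ∀ h : r ≤ k,
      Jint k r h (Fk k) ≤ (Real.log k / k) ^ r * Iint k (Fk k) := by
  filter_upwards [Aux8.A_ev] with k hA h
  obtain ⟨hA, hL⟩ := hA
  have hA0 : 0 < Aval k := by linarith
  have hk : 0 < k := by omega
  have hk0 : (0:ℝ) < k := by exact_mod_cast hk
  have hL0 : 0 < Real.log k := by linarith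
  calc _ ≤ ((1 / (k:ℝ)) ^ r) ^ 2 * (1 / (k * Aval k)) ^ (k - r) := Aux8.J_up h hk hA0
    _ = ((Aval k / k) * (1 / (k * Aval k))) ^ r * (1 / (k * Aval k)) ^ (k - r) := by
        congr 1
        rw [← pow_mul, mul_comm r 2, pow_mul]
        congr 1
        field_simp
    _ = (Aval k / k) ^ r * (1 / (k * Aval k)) ^ k := by
        rw [mul_pow, mul_assoc, ← pow_add, Nat.add_sub_cancel' h]
    _ ≤ (Real.log k / k) ^ r * (1 / (k * Aval k)) ^ k := by gcongr
    _ ≤ _ := by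
        gcongr
        exact Aux8.I_low hk hA
end

section
/- Fix an integer r ≥ 2. For k sufficiently large in terms of r, for every real x ≥ log k one has ∫_{t_1,...,t_r ≥ 0, t_1+⋯+t_r ≤ x} g(t_1)² ⋯ g(t_r)² dt_1 ⋯ dt_r ≥ 1/(log k)^r. -/
open MeasureTheory Filter

lemma gfun_meas (k : ℕ) : Measurable (gfun k) := by
  unfold gfun
  exact Measurable.ite measurableSet_Icc (by fun_prop) measurable_const

lemma gfun_int (k : ℕ) (hA : 0 < Aval k) : Integrable (fun t => gfun k t ^ 2) := by
  have h1 : Integrable ((Set.Icc (0:ℝ) (Tval k)).indicator (fun _ => (1:ℝ))) := by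
    rw [integrable_indicator_iff measurableSet_Icc]
    exact integrableOn_const (by simp)
  refine h1.mono' ((gfun_meas k).pow_const 2).aestronglyMeasurable (ae_of_all _ fun t => ?_)
  unfold gfun
  by_cases ht : t ∈ Set.Icc (0:ℝ) (Tval k)
  · have : 0 ≤ Aval k * t := mul_nonneg hA.le ht.1
    rw [if_pos ht, Set.indicator_of_mem ht, Real.norm_of_nonneg (by positivity)]
    apply pow_le_one₀ (by positivity)
    rw [div_le_one (by positivity)]
    linarith
  · simp [ht]

lemma gfun_val (k : ℕ) (hA : 0 < Aval k) :
    ∫ t in Set.Icc (0:ℝ) 1, gfun k t ^ 2 = 1 / (1 + Aval k) := by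
  have hT : 1 ≤ Tval k := by
    unfold Tval
    rw [le_div_iff₀ hA]
    linarith [Real.add_one_le_exp (Aval k)]
  have h1 : ∫ t in Set.Icc (0:ℝ) 1, gfun k t ^ 2
      = ∫ t in Set.Icc (0:ℝ) 1, 1 / (1 + Aval k * t) ^ 2 := by
    refine setIntegral_congr_fun measurableSet_Icc fun t ht => ?_
    have : t ∈ Set.Icc (0:ℝ) (Tval k) := ⟨ht.1, ht.2.trans hT⟩
    simp only [gfun]
    rw [if_pos this, one_div_pow]
  rw [h1, integral_Icc_eq_integral_Ioc, ← intervalIntegral.integral_of_le zero_le_one]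
  have hp : ∀ t ∈ Set.uIcc (0:ℝ) 1, 1 + Aval k * t ≠ 0 := by
    intro t ht
    rw [Set.uIcc_of_le zero_le_one] at ht
    have : 0 ≤ Aval k * t := mul_nonneg hA.le ht.1
    positivity
  rw [intervalIntegral.integral_eq_sub_of_hasDerivAt (f := fun t => t / (1 + Aval k * t))]
  · simp
  · intro t ht
    have := (hasDerivAt_id t).div (((hasDerivAt_id t).const_mul (Aval k)).const_add 1) (hp t ht)
    refine this.congr_deriv ?_
    simp only [id]
    congr 1
    ring
  · apply ContinuousOn.intervalIntegrable
    exact continuousOn_const.div (by fun_prop) fun t ht => pow_ne_zero 2 (hp t ht)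

theorem stmt9 (r : ℕ) (hr : 2 ≤ r) :
    ∀ᶠ k : ℕ in atTop, ∀ x : ℝ, Real.log k ≤ x →
      1 / Real.log k ^ r ≤
        ∫ t in {t : Fin r → ℝ | (∀ i, 0 ≤ t i) ∧ ∑ i, t i ≤ x},
          ∏ i, gfun k (t i) ^ 2 := by
  have hL : ∀ᶠ k : ℕ in atTop, (r:ℝ) ≤ Real.log k :=
    (Real.tendsto_log_atTop.comp tendsto_natCast_atTop_atTop).eventually_ge_atTop _
  filter_upwards [hL] with k hk x hx
  have hr' : (2:ℝ) ≤ r := by exact_mod_cast hr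
  have hL2 : 2 ≤ Real.log k := hr'.trans hk
  have hLpos : 0 < Real.log k := by linarith
  have hlog2 := Real.log_two_gt_d9
  have hlog2' := Real.log_two_lt_d9
  have hll : Real.log 2 ≤ Real.log (Real.log k) := Real.log_le_log (by norm_num) hL2
  have hA : 0 < Aval k := by
    unfold Aval
    have := Real.log_le_sub_one_of_pos (x := Real.log k / 2) (by positivity)
    rw [Real.log_div (by positivity) (by norm_num)] at this
    linarith
  have hA1 : 1 + Aval k ≤ Real.log k := by
    unfold Aval
    linarith
  have hint : Integrable (fun t : Fin r → ℝ => ∏ i, gfun k (t i) ^ 2) :=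
    Integrable.fintype_prod (f := fun _ : Fin r => fun t => gfun k t ^ 2) fun _ => gfun_int k hA
  have hbox : ∫ t in Set.univ.pi (fun _ : Fin r => Set.Icc (0:ℝ) 1), ∏ i, gfun k (t i) ^ 2
      = (1 / (1 + Aval k)) ^ r := by
    rw [volume_pi, Measure.restrict_pi_pi,
      integral_fintype_prod_eq_prod (f := fun _ : Fin r => fun t => gfun k t ^ 2)]
    simp [gfun_val k hA]
  calc 1 / Real.log k ^ r = (1 / Real.log k) ^ r := by rw [one_div_pow]
    _ ≤ (1 / (1 + Aval k)) ^ r := by gcongr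
    _ = _ := hbox.symm
    _ ≤ _ := by
      refine setIntegral_mono_set hint.integrableOn
        (ae_of_all _ fun t => Finset.prod_nonneg fun i _ => sq_nonneg _)
        (HasSubset.Subset.eventuallyLE ?_)
      intro t ht
      refine ⟨fun i => (ht i trivial).1, ?_⟩
      calc ∑ i, t i ≤ ∑ i : Fin r, (1:ℝ) := Finset.sum_le_sum fun i _ => (ht i trivial).2
        _ = r := by simp
        _ ≤ x := hk.trans hx
end

section
/- Let {h_1,...,h_k} be an admissible k-tuple, let S ⊆ ℤ, and let 𝒫 be a set of primes such that for some real x ≥ 2 one has {h_1,...,h_k} ⊆ S ⊆ [0,x²] and #{p ∈ 𝒫 : p > x} > |S| + k. Then there is a set of integers {a_p : p ∈ 𝒫} such that {h_1,...,h_k} = S \ ⋃_{p ∈ 𝒫} {g ∈ ℤ : g ≡ a_p (mod p)}. -/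
/-- A finite set of integers `H` is admissible if for every prime `p`, the residues `n mod p`
with `∏_{h ∈ H} (n + h) ≡ 0 (mod p)` do not cover all of `ℤ/pℤ`. -/
def AdmissibleSet (H : Finset ℤ) : Prop :=
  ∀ p : ℕ, p.Prime → {n : ZMod p | ∏ h ∈ H, (n + (h : ZMod p)) = 0}.ncard < p

lemma exists_avoid (H : Finset ℤ) (hadm : AdmissibleSet H) (p : ℕ) (hp : p.Prime) :
    ∃ b : ℤ, ∀ h ∈ H, ¬ h ≡ b [ZMOD (p : ℤ)] := by
  have : NeZero p := ⟨hp.ne_zero⟩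
  have h1 := hadm p hp
  have h2 : {n : ZMod p | ∏ h ∈ H, (n + (h : ZMod p)) = 0} ≠ Set.univ := by
    intro h
    rw [h, Set.ncard_univ, Nat.card_zmod] at h1
    exact lt_irrefl _ h1
  obtain ⟨n, hn⟩ := (Set.ne_univ_iff_exists_notMem _).1 h2
  obtain ⟨m, rfl⟩ := ZMod.intCast_surjective n
  refine ⟨-m, fun h hh hc => hn ?_⟩
  refine Finset.prod_eq_zero hh ?_
  have := (ZMod.intCast_eq_intCast_iff _ _ p).2 hc
  rw [this]
  push_cast
  ring

lemma bad_card (x : ℝ) (hx : 2 ≤ x) (Q : Finset ℕ) (hQ : ∀ p ∈ Q, p.Prime ∧ x < (p : ℝ))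
    (d : ℤ) (hd : d ≠ 0) (hdx : |(d : ℝ)| ≤ x ^ 2) :
    (Q.filter (fun p : ℕ => (p : ℤ) ∣ d)).card ≤ 1 := by
  rw [Finset.card_le_one]
  intro p hp q hq
  rw [Finset.mem_filter] at hp hq
  by_contra hne
  have hc : Nat.Coprime p q := (Nat.coprime_primes (hQ p hp.1).1 (hQ q hq.1).1).2 hne
  have hdvd : p * q ∣ d.natAbs :=
    hc.mul_dvd_of_dvd_of_dvd (Int.natCast_dvd.1 hp.2) (Int.natCast_dvd.1 hq.2)
  have hle := Nat.le_of_dvd (Int.natAbs_pos.2 hd) hdvd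
  have hle' : (p : ℝ) * q ≤ |(d : ℝ)| := by
    have : ((p * q : ℕ) : ℝ) ≤ (d.natAbs : ℝ) := by exact_mod_cast hle
    rw [Nat.cast_natAbs] at this
    push_cast at this
    exact this
  have h1 := (hQ p hp.1).2
  have h2 := (hQ q hq.1).2
  nlinarith

theorem stmt11 (k : ℕ) (H S : Finset ℤ) (hcard : H.card = k) (hadm : AdmissibleSet H)
    (P : Set ℕ) (hP : ∀ p ∈ P, Nat.Prime p) (x : ℝ) (hx : 2 ≤ x)
    (hHS : H ⊆ S) (hS : ∀ s ∈ S, (0 : ℝ) ≤ (s : ℝ) ∧ (s : ℝ) ≤ x ^ 2)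
    (hbig : S.card + k < {p ∈ P | x < (p : ℝ)}.ncard ∨ {p ∈ P | x < (p : ℝ)}.Infinite) :
    ∃ a : ℕ → ℤ,
      (H : Set ℤ) = (S : Set ℤ) \ ⋃ p ∈ P, {g : ℤ | g ≡ a p [ZMOD (p : ℤ)]} := by
  obtain ⟨Q, hQP, hQc⟩ : ∃ Q : Finset ℕ, (Q : Set ℕ) ⊆ {p ∈ P | x < (p : ℝ)} ∧
      S.card + k < Q.card := by
    rcases hbig with h | h
    · have hf : {p ∈ P | x < (p : ℝ)}.Finite := Set.finite_of_ncard_pos (by omega)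
      refine ⟨hf.toFinset, by simp, ?_⟩
      rwa [← Set.ncard_eq_toFinset_card _ hf]
    · obtain ⟨Q, h1, h2⟩ := h.exists_subset_card_eq (S.card + k + 1)
      exact ⟨Q, h1, by omega⟩
  have hQ : ∀ p ∈ Q, p.Prime ∧ x < (p : ℝ) := fun p hp => ⟨hP p (hQP hp).1, (hQP hp).2⟩
  let t : {s // s ∈ S \ H} → Finset ℕ := fun s =>
    Q \ H.biUnion (fun h => Q.filter (fun p : ℕ => (p : ℤ) ∣ s.1 - h))
  have ht : ∀ s, S.card ≤ (t s).card := by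
    rintro ⟨s, hs⟩
    rw [Finset.mem_sdiff] at hs
    have h1 : (H.biUnion (fun h => Q.filter (fun p : ℕ => (p : ℤ) ∣ s - h))).card ≤ H.card * 1 := by
      refine Finset.card_biUnion_le_card_mul _ _ _ fun h hh => ?_
      refine bad_card x hx Q hQ _ (fun h0 => hs.2 ?_) ?_
      · rwa [sub_eq_zero.1 h0]
      · have a1 := hS s hs.1
        have a2 := hS h (hHS hh)
        push_cast
        rw [abs_le]
        constructor <;> linarith
    have h2 := Finset.le_card_sdiff (H.biUnion (fun h => Q.filter (fun p : ℕ => (p : ℤ) ∣ s - h))) Q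
    change S.card ≤ (Q \ H.biUnion (fun h => Q.filter (fun p : ℕ => (p : ℤ) ∣ s - h))).card
    omega
  obtain ⟨f, hf, hft⟩ := (Finset.all_card_le_biUnion_card_iff_exists_injective t).1 (by
    intro A
    rcases A.eq_empty_or_nonempty with rfl | ⟨s, hs⟩
    · simp
    · calc A.card ≤ Fintype.card {s // s ∈ S \ H} := Finset.card_le_univ A
        _ = (S \ H).card := Fintype.card_coe _
        _ ≤ S.card := Finset.card_le_card Finset.sdiff_subset
        _ ≤ (t s).card := ht s
        _ ≤ _ := Finset.card_le_card (Finset.subset_biUnion_of_mem t hs))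
  have hb : ∀ p : ℕ, ∃ b : ℤ, p.Prime → ∀ h ∈ H, ¬ h ≡ b [ZMOD (p : ℤ)] := by
    intro p
    by_cases hp : p.Prime
    · obtain ⟨b, hb⟩ := exists_avoid H hadm p hp
      exact ⟨b, fun _ => hb⟩
    · exact ⟨0, fun h => absurd h hp⟩
  choose b hb using hb
  refine ⟨Function.extend f (fun s => s.1) b, ?_⟩
  ext g
  simp only [Set.mem_sdiff, Finset.mem_coe, Set.mem_iUnion, Set.mem_ofPred_eq, exists_prop, not_exists,
    not_and]
  constructor
  · intro hg
    refine ⟨hHS hg, fun p hp hc => ?_⟩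
    by_cases hex : ∃ s, f s = p
    · obtain ⟨s, rfl⟩ := hex
      rw [hf.extend_apply] at hc
      have h1 := hft s
      simp only [t, Finset.mem_sdiff, Finset.mem_biUnion, Finset.mem_filter, not_exists,
        not_and] at h1
      exact h1.2 g hg h1.1 hc.dvd
    · rw [Function.extend_apply' _ _ _ hex] at hc
      exact hb p (hP p hp) g hg hc
  · rintro ⟨hg, hall⟩
    by_contra hgH
    have hm : g ∈ S \ H := Finset.mem_sdiff.2 ⟨hg, hgH⟩
    have h1 := hft ⟨g, hm⟩
    have h2 : f ⟨g, hm⟩ ∈ Q := (Finset.mem_sdiff.1 h1).1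
    refine hall (f ⟨g, hm⟩) (hQP h2).1 ?_
    rw [hf.extend_apply]
end
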